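/- With confidence at least 1 − 2δ over the draw of n domains P^{(1)},…,P^{(n)} i.i.d. from the proxy meta-distribution μ' and m i.i.d. samples from each domain, simultaneously for all f ∈ F: L^μ(f) ≤ L̂^{μ'}(f) + 2·R_{mn}(F) + 2·R_n(F) + 3·√(ln(2/δ)/(2mn)) + 3·√(ln(2/δ)/n) + ε, provided D(μ, μ') ≤ ε. -/

import Mathlib

open MeasureTheory Real Filter

noncomputable section

/-- The output space `Y = {1, -1}`, as a subtype of the integers. -/
abbrev Ysp : Type := ({1, -1} : Set ℤ)

/-- The risk `L_P(f) = E_{(x,y) ~ P}[ℓ(f(x), y)]` of a decision function `f`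
under a distribution `P` on `X × Y`. -/
def risk {X : Type*} [MeasurableSpace X] (ℓ : Ysp → Ysp → ℝ)
    (P : Measure (X × Ysp)) (f : X → Ysp) : ℝ :=
  ∫ p, ℓ (f p.1) p.2 ∂P

/-- The population risk `L^μ(f) = E_{P ~ μ}[L_P(f)]` under a meta-distribution `μ`. -/
def metaRisk {X : Type*} [MeasurableSpace X] (ℓ : Ysp → Ysp → ℝ)
    (μ : Measure (Measure (X × Ysp))) (f : X → Ysp) : ℝ :=
  ∫ P, risk ℓ P f ∂μ

/-- Interpret a boolean as a random sign in `{-1, +1}`. -/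
def sgn (b : Bool) : ℝ := if b then 1 else -1

/-- Empirical Rademacher complexity of the class `F` on the sample `S`:
the expectation, over i.i.d. uniform random signs `σ`, of
`sup_{f ∈ F} (1/N) ∑ₖ σₖ ℓ(f(xₖ), yₖ)` where `N` is the sample size. -/
def rad {X : Type*} [MeasurableSpace X] (ℓ : Ysp → Ysp → ℝ) (F : Set (X → Ysp))
    {ι : Type*} [Fintype ι] [DecidableEq ι] (S : ι → X × Ysp) : ℝ :=
  (∑ σ : ι → Bool, ⨆ f ∈ F,
      (Fintype.card ι : ℝ)⁻¹ * ∑ k, sgn (σ k) * ℓ (f (S k).1) (S k).2) /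
    2 ^ Fintype.card ι

/-- Domain-level Rademacher average of `F` on the domains `P 0, …, P (n-1)`:
the expectation, over i.i.d. uniform random signs `σ`, of
`sup_{f ∈ F} (1/n) ∑ⱼ σⱼ L_{P⁽ʲ⁾}(f)`. -/
def radDom {X : Type*} [MeasurableSpace X] (ℓ : Ysp → Ysp → ℝ) (F : Set (X → Ysp))
    {n : ℕ} (P : Fin n → Measure (X × Ysp)) : ℝ :=
  (∑ σ : Fin n → Bool, ⨆ f ∈ F,
      (n : ℝ)⁻¹ * ∑ j, sgn (σ j) * risk ℓ (P j) f) / 2 ^ n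

/-- The joint law of (the tuple of `n` i.i.d. domains drawn from a meta-distribution `μ`,
an `n × m` array of samples whose `j`-th row consists of `m` i.i.d. samples from
the `j`-th drawn domain). -/
def jointLaw {X : Type*} [MeasurableSpace X] (n m : ℕ)
    (μ : Measure (Measure (X × Ysp))) :
    Measure ((Fin n → Measure (X × Ysp)) × ((Fin n × Fin m) → X × Ysp)) :=
  (Measure.pi fun _ : Fin n => μ).bind fun P =>
    (Measure.pi fun p : Fin n × Fin m => P p.1).map fun s => (P, s)

/-!
For functions with values in `[0, 1]` on a sample of size `N`, the uniform deviation minus twice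
the Rademacher complexity changes by at most `3 / N` when one point changes, and its mean is
nonpositive by symmetrization with a ghost sample. McDiarmid's inequality then bounds its upper
tail, the `3` being the one in front of the square roots. This is applied twice: to the domains,
through the functions `P ↦ L_P(f)`, and, conditionally on the domains, to the pooled sample, whose
points are independent but not identically distributed. Replacing `μ'` by `μ` costs at most
`D(μ, μ') ≤ ε`.

A meta-distribution lives on all measures; it is carried over to the probability measures, where
sampling from the drawn domains is a Markov kernel.
-/

open ProbabilityTheory
open scoped NNReal

section McDiarmid

variable {ι : Type*} [DecidableEq ι] {X : ι → Type*}

/-- The bounded differences condition of McDiarmid's inequality: changing the `k`-th argument of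
`H` changes its value by at most `c k`. -/
def HasBoundedDifferences (H : (∀ i, X i) → ℝ) (c : ι → ℝ≥0) : Prop :=
  ∀ x k z, |H (Function.update x k z) - H x| ≤ c k

namespace HasBoundedDifferences

variable {H G : (∀ i, X i) → ℝ} {c d : ι → ℝ≥0}

lemma sub (hH : HasBoundedDifferences H c) (hG : HasBoundedDifferences G d) :
    HasBoundedDifferences (fun x => H x - G x) (c + d) := fun x k z =>
  calc |H (Function.update x k z) - G (Function.update x k z) - (H x - G x)|
      = |(H (Function.update x k z) - H x) - (G (Function.update x k z) - G x)| := by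
        congr 1; ring
    _ ≤ |H (Function.update x k z) - H x| + |G (Function.update x k z) - G x| := abs_sub _ _
    _ ≤ ↑((c + d) k) := by
        rw [Pi.add_apply, NNReal.coe_add]
        exact add_le_add (hH x k z) (hG x k z)

lemma const_mul (hH : HasBoundedDifferences H c) (r : ℝ≥0) :
    HasBoundedDifferences (fun x => r * H x) (r • c) := fun x k z => by
  rw [← mul_sub, abs_mul, NNReal.abs_eq, Pi.smul_apply, smul_eq_mul, NNReal.coe_mul]
  exact mul_le_mul_of_nonneg_left (hH x k z) r.coe_nonneg

lemma update_le_update_add (hH : HasBoundedDifferences H c) (x : ∀ i, X i) (k : ι) (z z' : X k) :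
    H (Function.update x k z) ≤ H (Function.update x k z') + c k := by
  have h := hH (Function.update x k z') k z
  rw [Function.update_idem] at h
  linarith [le_of_abs_le h]

lemma abs_sub_le_sum [Fintype ι] (hH : HasBoundedDifferences H c) (x y : ∀ i, X i) :
    |H x - H y| ≤ ∑ k, (c k : ℝ) := by
  suffices h : ∀ s : Finset ι, |H (s.piecewise x y) - H y| ≤ ∑ k ∈ s, (c k : ℝ) by
    simpa only [Finset.piecewise_univ] using h Finset.univ
  intro s
  induction s using Finset.induction_on with
  | empty => simp
  | insert k s hk ih =>
    rw [Finset.piecewise_insert, Finset.sum_insert hk]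
    exact (abs_sub_le _ (H (s.piecewise x y)) _).trans (add_le_add (hH _ k _) ih)

variable [Finite ι]

lemma exists_forall_mem_Icc (hH : HasBoundedDifferences H c) :
    ∃ a b, ∀ x, H x ∈ Set.Icc a b := by
  have := Fintype.ofFinite ι
  rcases isEmpty_or_nonempty (∀ i, X i) with h | ⟨⟨y⟩⟩
  · exact ⟨0, 0, fun x => h.elim x⟩
  · refine ⟨H y - ∑ k, (c k : ℝ), H y + ∑ k, (c k : ℝ), fun x => ?_⟩
    have h := abs_le.1 (hH.abs_sub_le_sum x y)
    exact ⟨by linarith [h.1], by linarith [h.2]⟩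

variable [∀ i, MeasurableSpace (X i)]

lemma integrable (hH : HasBoundedDifferences H c) (hm : Measurable H)
    (μ : Measure (∀ i, X i)) [IsFiniteMeasure μ] : Integrable H μ := by
  obtain ⟨a, b, hab⟩ := hH.exists_forall_mem_Icc
  exact Integrable.of_mem_Icc a b hm.aemeasurable (Eventually.of_forall hab)

lemma integrable_exp_mul (hH : HasBoundedDifferences H c) (hm : Measurable H)
    (μ : Measure (∀ i, X i)) [IsFiniteMeasure μ] (t : ℝ) :
    Integrable (fun x => exp (t * H x)) μ := by
  obtain ⟨a, b, hab⟩ := hH.exists_forall_mem_Icc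
  exact integrable_exp_mul_of_mem_Icc hm.aemeasurable (Eventually.of_forall hab)

end HasBoundedDifferences

variable [∀ i, MeasurableSpace (X i)]

lemma measurable_integral_update {H : (∀ i, X i) → ℝ} (hm : Measurable H) {k : ι}
    (μ : Measure (X k)) [SFinite μ] :
    Measurable fun x => ∫ z, H (Function.update x k z) ∂μ :=
  (StronglyMeasurable.integral_prod_right' (ν := μ)
    (hm.comp measurable_update').stronglyMeasurable).measurable

section OneCoordinate

variable [Finite ι] {ν : ∀ i, Measure (X i)} [∀ i, IsProbabilityMeasure (ν i)]
  {H : (∀ i, X i) → ℝ} {c : ι → ℝ≥0}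

lemma HasBoundedDifferences.integrable_update (hH : HasBoundedDifferences H c)
    (hm : Measurable H) (x : ∀ i, X i) (k : ι) :
    Integrable (fun z => H (Function.update x k z)) (ν k) := by
  obtain ⟨a, b, hab⟩ := hH.exists_forall_mem_Icc
  exact Integrable.of_mem_Icc a b (hm.comp (measurable_update x)).aemeasurable
    (Eventually.of_forall fun z => hab _)

lemma HasBoundedDifferences.integral_update (hH : HasBoundedDifferences H c)
    (hm : Measurable H) (k : ι) :
    HasBoundedDifferences (fun x => ∫ z, H (Function.update x k z) ∂ν k)
      (Function.update c k 0) := by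
  intro x j w
  rcases eq_or_ne j k with rfl | hj
  · simp
  · rw [Function.update_of_ne hj, ← integral_sub (hH.integrable_update hm _ k)
      (hH.integrable_update hm x k)]
    have h := norm_integral_le_of_norm_le_const (μ := ν k) (C := c j)
      (f := fun z => H (Function.update (Function.update x j w) k z) - H (Function.update x k z))
      (Eventually.of_forall fun z => by
        rw [Function.update_comm hj]; exact hH (Function.update x k z) j w)
    simpa using h

lemma HasBoundedDifferences.hasSubgaussianMGF_update (hH : HasBoundedDifferences H c)
    (hm : Measurable H) (x : ∀ i, X i) (k : ι) :
    HasSubgaussianMGF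
      (fun z => H (Function.update x k z) - ∫ z', H (Function.update x k z') ∂ν k)
      ((c k / 2) ^ 2) (ν k) := by
  have : Nonempty (X k) := ⟨x k⟩
  obtain ⟨a, b, hab⟩ := hH.exists_forall_mem_Icc
  have hbdd : BddBelow (Set.range fun z => H (Function.update x k z)) :=
    ⟨a, Set.forall_mem_range.2 fun z => (hab _).1⟩
  have hmem : ∀ z, H (Function.update x k z) ∈ Set.Icc (⨅ z', H (Function.update x k z'))
      ((⨅ z', H (Function.update x k z')) + c k) := fun z =>
    ⟨ciInf_le hbdd z, sub_le_iff_le_add.1 <| le_ciInf fun z' =>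
      sub_le_iff_le_add.2 (hH.update_le_update_add x k z z')⟩
  have h := hasSubgaussianMGF_of_mem_Icc (μ := ν k)
    (X := fun z => H (Function.update x k z)) (hm.comp (measurable_update x)).aemeasurable
    (Eventually.of_forall hmem)
  rwa [add_sub_cancel_left, NNReal.nnnorm_eq] at h

end OneCoordinate

variable [Fintype ι] (ν : ∀ i, Measure (X i)) [∀ i, IsProbabilityMeasure (ν i)]

lemma measurePreserving_update (k : ι) :
    MeasurePreserving (fun p : (∀ i, X i) × X k => Function.update p.1 k p.2)
      ((Measure.pi ν).prod (ν k)) (Measure.pi ν) := by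
  have hm : Measurable fun p : (∀ i, X i) × X k => Function.update p.1 k p.2 :=
    measurable_update'
  refine ⟨hm, (Measure.pi_eq fun s hs => ?_).symm⟩
  have hpre : (fun p : (∀ i, X i) × X k => Function.update p.1 k p.2) ⁻¹' Set.univ.pi s =
      Set.univ.pi (Function.update s k Set.univ) ×ˢ s k := by
    ext ⟨x, z⟩
    simp only [Set.mem_preimage, Set.mem_univ_pi, Set.mem_prod]
    refine ⟨fun h => ⟨fun i => ?_, by simpa using h k⟩, fun ⟨h, hz⟩ i => ?_⟩
    all_goals
      rcases eq_or_ne i k with rfl | hi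
      · simp_all
    · simpa [hi] using h i
    · simpa [hi] using h i
  rw [Measure.map_apply hm (MeasurableSet.univ_pi hs), hpre, Measure.prod_prod, Measure.pi_pi,
    ← Finset.prod_erase_mul _ _ (Finset.mem_univ k),
    ← Finset.prod_erase_mul _ _ (Finset.mem_univ k), Function.update_self, measure_univ, mul_one]
  congr 1
  refine Finset.prod_congr rfl fun i hi => ?_
  rw [Function.update_of_ne (Finset.ne_of_mem_erase hi)]

variable {ν}

lemma integral_pi_eq_integral_integral_update {H : (∀ i, X i) → ℝ}
    (hH : Integrable H (Measure.pi ν)) (k : ι) :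
    ∫ x, H x ∂Measure.pi ν = ∫ x, ∫ z, H (Function.update x k z) ∂ν k ∂Measure.pi ν := by
  have hmp := measurePreserving_update ν k
  calc ∫ x, H x ∂Measure.pi ν
      = ∫ x, H x ∂((Measure.pi ν).prod (ν k)).map fun p => Function.update p.1 k p.2 := by
        rw [hmp.map_eq]
    _ = ∫ p, H (Function.update p.1 k p.2) ∂(Measure.pi ν).prod (ν k) :=
        integral_map hmp.aemeasurable (by rw [hmp.map_eq]; exact hH.aestronglyMeasurable)
    _ = ∫ x, ∫ z, H (Function.update x k z) ∂ν k ∂Measure.pi ν :=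
        integral_prod _ (hmp.integrable_comp_of_integrable hH)

variable {H : (∀ i, X i) → ℝ} {c : ι → ℝ≥0}

lemma HasBoundedDifferences.hasSubgaussianMGF_of_integral_update
    (hH : HasBoundedDifferences H c) (hm : Measurable H) (k : ι) {a : ℝ} {C : ℝ≥0}
    (h : HasSubgaussianMGF (fun x => (∫ z, H (Function.update x k z) ∂ν k) - a) C
      (Measure.pi ν)) :
    HasSubgaussianMGF (fun x => H x - a) (C + (c k / 2) ^ 2) (Measure.pi ν) := by
  have hint (t : ℝ) : Integrable (fun x => exp (t * (H x - a))) (Measure.pi ν) := by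
    simp only [mul_sub, exp_sub]
    exact (hH.integrable_exp_mul hm _ t).div_const _
  refine ⟨hint, fun t => ?_⟩
  set K : (∀ i, X i) → ℝ := fun x => ∫ z, H (Function.update x k z) ∂ν k
  have hsection (x : ∀ i, X i) : ∫ z, exp (t * (H (Function.update x k z) - a)) ∂ν k ≤
      exp ((c k / 2) ^ 2 * t ^ 2 / 2) * exp (t * (K x - a)) :=
    calc ∫ z, exp (t * (H (Function.update x k z) - a)) ∂ν k
        = mgf (fun z => H (Function.update x k z) - K x) (ν k) t * exp (t * (K x - a)) := by
          rw [mgf, ← integral_mul_const]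
          refine integral_congr_ae (Eventually.of_forall fun z => ?_)
          simp only [← exp_add]
          congr 1; ring
      _ ≤ _ := by
          gcongr
          exact_mod_cast (hH.hasSubgaussianMGF_update hm x k).mgf_le t
  calc mgf (fun x => H x - a) (Measure.pi ν) t
      = ∫ x, ∫ z, exp (t * (H (Function.update x k z) - a)) ∂ν k ∂Measure.pi ν :=
        integral_pi_eq_integral_integral_update (hint t) k
    _ ≤ ∫ x, exp ((c k / 2) ^ 2 * t ^ 2 / 2) * exp (t * (K x - a)) ∂Measure.pi ν :=
        integral_mono
          ((measurePreserving_update ν k).integrable_comp_of_integrable (hint t)).integral_prod_left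
          ((h.integrable_exp_mul t).const_mul _) hsection
    _ = exp ((c k / 2) ^ 2 * t ^ 2 / 2) * mgf (fun x => K x - a) (Measure.pi ν) t :=
        integral_const_mul _ _
    _ ≤ exp ((c k / 2) ^ 2 * t ^ 2 / 2) * exp (C * t ^ 2 / 2) := by
        gcongr
        exact h.mgf_le t
    _ = exp ((C + (c k / 2) ^ 2 : ℝ≥0) * t ^ 2 / 2) := by
        rw [← exp_add]
        push_cast
        congr 1; ring

theorem HasBoundedDifferences.hasSubgaussianMGF (hH : HasBoundedDifferences H c)
    (hm : Measurable H) :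
    HasSubgaussianMGF (fun x => H x - ∫ y, H y ∂Measure.pi ν) (∑ k, (c k / 2) ^ 2)
      (Measure.pi ν) := by
  suffices h : ∀ (s : Finset ι) (H : (∀ i, X i) → ℝ) (c : ι → ℝ≥0), HasBoundedDifferences H c →
      Measurable H → (∀ k ∉ s, c k = 0) →
      HasSubgaussianMGF (fun x => H x - ∫ y, H y ∂Measure.pi ν) (∑ k ∈ s, (c k / 2) ^ 2)
        (Measure.pi ν) from
    h Finset.univ H c hH hm fun k hk => absurd (Finset.mem_univ k) hk
  intro s
  induction s using Finset.induction_on with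
  | empty =>
    intro H c hH _ hc
    have hconst (x y : ∀ i, X i) : H x = H y := by
      simpa [hc, sub_eq_zero] using hH.abs_sub_le_sum x y
    have hmean (x : ∀ i, X i) : H x - ∫ y, H y ∂Measure.pi ν = 0 := by
      rw [integral_congr_ae (Eventually.of_forall fun y => hconst y x)]
      simp
    simp [hmean]
  | insert k s hk ih =>
    intro H c hH hm hc
    have hK := ih _ _ (hH.integral_update hm k) (measurable_integral_update hm (ν k))
      fun j hj => by
        rcases eq_or_ne j k with rfl | hjk
        · simp
        · rw [Function.update_of_ne hjk, hc j (by simp [hjk, hj])]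
    rw [← integral_pi_eq_integral_integral_update (hH.integrable hm _) k] at hK
    have hsum : ∑ j ∈ s, (Function.update c k 0 j / 2) ^ 2 = ∑ j ∈ s, (c j / 2) ^ 2 :=
      Finset.sum_congr rfl fun j hj => by
        rw [Function.update_of_ne (ne_of_mem_of_not_mem hj hk)]
    rw [hsum] at hK
    rw [Finset.sum_insert hk, add_comm]
    exact hH.hasSubgaussianMGF_of_integral_update hm k hK

theorem HasBoundedDifferences.measureReal_sub_integral_ge_le (hH : HasBoundedDifferences H c)
    (hm : Measurable H) {a : ℝ} (ha : 0 ≤ a) :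
    (Measure.pi ν).real {x | a ≤ H x - ∫ y, H y ∂Measure.pi ν} ≤
      exp (-2 * a ^ 2 / ∑ k, (c k : ℝ) ^ 2) := by
  refine ((hH.hasSubgaussianMGF hm).measure_ge_le ha).trans_eq (congrArg exp ?_)
  push_cast
  simp only [div_pow, ← Finset.sum_div]
  ring

end McDiarmid

section SupAverage

variable {I ι : Type*} [Fintype ι]

/-- The supremum over a family, indexed by `I`, of the averages of its members over `ι`. It is the
common form of Rademacher sums and of deviations of empirical means. -/
def supAverage (v : I → ι → ℝ) : ℝ :=
  ⨆ i, (Fintype.card ι : ℝ)⁻¹ * ∑ k, v i k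

lemma abs_average_le {φ : ι → ℝ} {b : ℝ≥0} (hφ : ∀ k, |φ k| ≤ b) :
    |(Fintype.card ι : ℝ)⁻¹ * ∑ k, φ k| ≤ b := by
  have hsum : |∑ k, φ k| ≤ Fintype.card ι * (b : ℝ) :=
    (Finset.abs_sum_le_sum_abs _ _).trans <|
      (Finset.sum_le_sum fun k _ => hφ k).trans_eq (by simp)
  rw [abs_mul, abs_of_nonneg (by positivity : (0 : ℝ) ≤ (Fintype.card ι : ℝ)⁻¹)]
  calc (Fintype.card ι : ℝ)⁻¹ * |∑ k, φ k|
      ≤ (Fintype.card ι : ℝ)⁻¹ * (Fintype.card ι * b) := by gcongr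
    _ = (Fintype.card ι : ℝ)⁻¹ * Fintype.card ι * b := (mul_assoc _ _ _).symm
    _ ≤ b := mul_le_of_le_one_left b.coe_nonneg inv_mul_le_one

variable {v w : I → ι → ℝ} {a b : ℝ≥0}

lemma le_supAverage (hv : ∀ i k, |v i k| ≤ b) (i : I) :
    (Fintype.card ι : ℝ)⁻¹ * ∑ k, v i k ≤ supAverage v :=
  le_ciSup (f := fun i => (Fintype.card ι : ℝ)⁻¹ * ∑ k, v i k)
    ⟨b, Set.forall_mem_range.2 fun i => (abs_le.1 (abs_average_le (hv i))).2⟩ i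

lemma abs_supAverage_le (hv : ∀ i k, |v i k| ≤ b) : |supAverage v| ≤ b := by
  rcases isEmpty_or_nonempty I with hI | ⟨⟨i⟩⟩
  · simp [supAverage]
  · exact abs_le.2 ⟨(abs_le.1 (abs_average_le (hv i))).1.trans (le_supAverage hv i),
      Real.iSup_le (fun i => (abs_le.1 (abs_average_le (hv i))).2) b.coe_nonneg⟩

lemma supAverage_add_le (hv : ∀ i k, |v i k| ≤ a) (hw : ∀ i k, |w i k| ≤ b) :
    supAverage (fun i k => v i k + w i k) ≤ supAverage v + supAverage w := by
  rcases isEmpty_or_nonempty I with hI | hI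
  · simp [supAverage]
  · refine ciSup_le fun i => ?_
    rw [Finset.sum_add_distrib, mul_add]
    exact add_le_add (le_supAverage hv i) (le_supAverage hw i)

lemma supAverage_le_add_of_eq_off (hw : ∀ i k, |w i k| ≤ b) (k : ι)
    (hk : ∀ i, v i k ≤ w i k + a) (hne : ∀ i, ∀ j ≠ k, v i j = w i j) :
    supAverage v ≤ supAverage w + a / Fintype.card ι := by
  classical
  rcases isEmpty_or_nonempty I with hI | hI
  · simp only [supAverage, Real.iSup_of_isEmpty]; positivity
  · refine ciSup_le fun i => ?_
    have hsum : ∑ j, v i j ≤ ∑ j, w i j + a := by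
      rw [← Finset.add_sum_erase _ _ (Finset.mem_univ k),
        ← Finset.add_sum_erase _ (w i) (Finset.mem_univ k),
        Finset.sum_congr rfl fun j hj => hne i j (Finset.ne_of_mem_erase hj)]
      linarith [hk i]
    calc (Fintype.card ι : ℝ)⁻¹ * ∑ j, v i j
        ≤ (Fintype.card ι : ℝ)⁻¹ * (∑ j, w i j + a) := by gcongr
      _ = (Fintype.card ι : ℝ)⁻¹ * ∑ j, w i j + a / Fintype.card ι := by ring
      _ ≤ supAverage w + a / Fintype.card ι := by
        gcongr
        exact le_supAverage hw i

lemma hasBoundedDifferences_supAverage [DecidableEq ι] {Z : ι → Type*}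
    {f : I → ∀ k, Z k → ℝ} (hf : ∀ i k z, |f i k z| ≤ b)
    (hosc : ∀ i k z z', |f i k z - f i k z'| ≤ a) :
    HasBoundedDifferences (fun s : ∀ k, Z k => supAverage fun i k => f i k (s k))
      fun _ => a / Fintype.card ι := by
  have hle (k : ι) (x y : ∀ k, Z k) (hxy : ∀ j ≠ k, x j = y j) :
      (supAverage fun i k => f i k (x k)) ≤
        (supAverage fun i k => f i k (y k)) + a / Fintype.card ι :=
    supAverage_le_add_of_eq_off (fun i k => hf i k (y k)) k
      (fun i => by linarith [(abs_le.1 (hosc i k (x k) (y k))).2])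
      fun i j hj => by rw [hxy j hj]
  intro x k z
  have h₁ := hle k (Function.update x k z) x fun j hj => Function.update_of_ne hj _ _
  have h₂ := hle k x (Function.update x k z) fun j hj => (Function.update_of_ne hj _ _).symm
  push_cast
  exact abs_le.2 ⟨by linarith, by linarith⟩

variable {Ω : Type*} [MeasurableSpace Ω] [Countable I] {V : I → ι → Ω → ℝ}

lemma measurable_supAverage (hV : ∀ i k, Measurable (V i k)) :
    Measurable fun ω => supAverage fun i k => V i k ω :=
  Measurable.iSup fun i => (Finset.measurable_sum _ fun k _ => hV i k).const_mul _

variable {P : Measure Ω}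

lemma integrable_supAverage [IsFiniteMeasure P] (hV : ∀ i k, Measurable (V i k))
    (hb : ∀ i k ω, |V i k ω| ≤ b) : Integrable (fun ω => supAverage fun i k => V i k ω) P :=
  Integrable.of_bound (measurable_supAverage hV).aestronglyMeasurable b <|
    Eventually.of_forall fun ω => abs_supAverage_le fun i k => hb i k ω

lemma supAverage_integral_le [IsFiniteMeasure P] (hV : ∀ i k, Measurable (V i k))
    (hb : ∀ i k ω, |V i k ω| ≤ b) :
    (supAverage fun i k => ∫ ω, V i k ω ∂P) ≤ ∫ ω, supAverage (fun i k => V i k ω) ∂P := by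
  rcases isEmpty_or_nonempty I with hI | hI
  · simp [supAverage]
  · refine ciSup_le fun i => ?_
    have hint (k : ι) : Integrable (V i k) P :=
      Integrable.of_bound (hV i k).aestronglyMeasurable b (Eventually.of_forall (hb i k))
    rw [← integral_finsetSum _ fun k _ => hint k, ← integral_const_mul]
    exact integral_mono ((integrable_finsetSum _ fun k _ => hint k).const_mul _)
      (integrable_supAverage hV hb) fun ω => le_supAverage (fun i k => hb i k ω) i

end SupAverage

section IntegralBounds

variable {Z : Type*} [MeasurableSpace Z] {P : Measure Z} [IsProbabilityMeasure P] {f : Z → ℝ}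

lemma abs_integral_le {b : ℝ≥0} (hf : ∀ z, |f z| ≤ b) : |∫ z, f z ∂P| ≤ b := by
  simpa using norm_integral_le_of_norm_le_const (μ := P) (f := f) (Eventually.of_forall hf)

lemma integral_mem_Icc_zero {b : ℝ} (hf : ∀ᵐ z ∂P, f z ∈ Set.Icc 0 b) :
    ∫ z, f z ∂P ∈ Set.Icc 0 b := by
  refine ⟨integral_nonneg_of_ae (hf.mono fun z hz => hz.1), ?_⟩
  have h := norm_integral_le_of_norm_le_const (μ := P) (f := f)
    (hf.mono fun z hz => (Real.norm_of_nonneg hz.1).trans_le hz.2)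
  simpa using (Real.le_norm_self _).trans h

lemma abs_le_of_mem_Icc_zero {x b : ℝ} (hx : x ∈ Set.Icc 0 b) : |x| ≤ b :=
  (abs_of_nonneg hx.1).trans_le hx.2

end IntegralBounds

section Deviation

variable {I Z ι : Type*} [Fintype ι] [MeasurableSpace Z]

/-- The uniform one-sided deviation, over a family `u` of functions, of the mean under the laws
`ν k` from the empirical mean on a sample `s`, whose `k`-th point is meant to have law `ν k`. -/
def deviation (u : I → Z → ℝ) (ν : ι → Measure Z) (s : ι → Z) : ℝ :=
  supAverage fun i k => ∫ z, u i z ∂ν k - u i (s k)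

variable {u : I → Z → ℝ} {a b : ℝ≥0} {ν : ι → Measure Z}

lemma measurable_deviation [Countable I] (hm : ∀ i, Measurable (u i)) :
    Measurable (deviation u ν) :=
  measurable_supAverage fun i k => ((hm i).comp (measurable_pi_apply k)).const_sub _

variable [∀ k, IsProbabilityMeasure (ν k)]

omit [Fintype ι] in
lemma abs_integral_sub_le (hu : ∀ i z, |u i z| ≤ b) (i : I) (k : ι) (z : Z) :
    |∫ z', u i z' ∂ν k - u i z| ≤ (b + b : ℝ≥0) :=
  (abs_sub _ _).trans (add_le_add (abs_integral_le (hu i)) (hu i z))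

lemma average_integral_le_add_deviation (hu : ∀ i z, |u i z| ≤ b) (i : I) (s : ι → Z) :
    (Fintype.card ι : ℝ)⁻¹ * ∑ k, ∫ z, u i z ∂ν k ≤
      (Fintype.card ι : ℝ)⁻¹ * ∑ k, u i (s k) + deviation u ν s := by
  have h := le_supAverage (fun i k => abs_integral_sub_le (ν := ν) hu i k (s k)) i
  rw [Finset.sum_sub_distrib, mul_sub] at h
  exact sub_le_iff_le_add'.1 h

lemma hasBoundedDifferences_deviation [DecidableEq ι] (hu : ∀ i z, |u i z| ≤ b)
    (hosc : ∀ i z z', |u i z - u i z'| ≤ a) :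
    HasBoundedDifferences (deviation u ν) fun _ => a / Fintype.card ι :=
  hasBoundedDifferences_supAverage (f := fun i k z => ∫ z', u i z' ∂ν k - u i z)
    (abs_integral_sub_le hu) fun i k z z' => by
      rw [sub_sub_sub_cancel_left]; exact hosc i z' z

lemma integral_deviation_le_integral_ghost [Countable I] (hm : ∀ i, Measurable (u i))
    (hu : ∀ i z, |u i z| ≤ b) :
    ∫ s, deviation u ν s ∂Measure.pi ν ≤
      ∫ p : (ι → Z) × (ι → Z), supAverage (fun i k => u i (p.2 k) - u i (p.1 k))
        ∂(Measure.pi ν).prod (Measure.pi ν) := by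
  have hbound (i : I) (x y : Z) : |u i x - u i y| ≤ (b + b : ℝ≥0) :=
    (abs_sub _ _).trans (add_le_add (hu i x) (hu i y))
  have hghost : Integrable (fun p : (ι → Z) × (ι → Z) =>
      supAverage fun i k => u i (p.2 k) - u i (p.1 k))
      ((Measure.pi ν).prod (Measure.pi ν)) :=
    integrable_supAverage (fun i k => by have := hm i; fun_prop) fun i k p => hbound i _ _
  have hdev : Integrable (deviation u ν) (Measure.pi ν) :=
    integrable_supAverage (fun i k => ((hm i).comp (measurable_pi_apply k)).const_sub _)
      fun i k s => abs_integral_sub_le hu i k _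
  rw [integral_prod _ hghost]
  refine integral_mono hdev hghost.integral_prod_left fun s => ?_
  have hmean (i : I) (k : ι) : ∫ z, u i z ∂ν k - u i (s k) =
      ∫ s' : ι → Z, (u i (s' k) - u i (s k)) ∂Measure.pi ν := by
    have hint : Integrable (u i) (ν k) :=
      Integrable.of_bound (hm i).aestronglyMeasurable b (Eventually.of_forall (hu i))
    rw [integral_sub (integrable_comp_eval hint) (integrable_const _),
      integral_comp_eval hint.aestronglyMeasurable]
    simp
  simp only [deviation, hmean]
  exact supAverage_integral_le (fun i k => by have := hm i; fun_prop) fun i k s' => hbound i _ _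

end Deviation

section Rademacher

variable {I Z ι : Type*} [Fintype ι] {u : I → Z → ℝ} {a b : ℝ≥0}

lemma abs_sgn_mul (β : Bool) (x : ℝ) : |sgn β * x| = |x| := by
  cases β <;> simp [sgn]

/-- The supremum over the family `u` of the averages on the sample `s` weighted by the signs `σ`,
whose mean over `σ` is the Rademacher complexity. -/
def signedSup (u : I → Z → ℝ) (σ : ι → Bool) (s : ι → Z) : ℝ :=
  supAverage fun i k => sgn (σ k) * u i (s k)

/-- The empirical Rademacher complexity of a family `u` of real functions on the sample `s`, the
expectation over independent uniform signs being written as a finite average. -/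
def rademacher [DecidableEq ι] (u : I → Z → ℝ) (s : ι → Z) : ℝ :=
  (∑ σ : ι → Bool, signedSup u σ s) / 2 ^ Fintype.card ι

lemma hasBoundedDifferences_signedSup [DecidableEq ι] (hu : ∀ i z, |u i z| ≤ b)
    (hosc : ∀ i z z', |u i z - u i z'| ≤ a) (σ : ι → Bool) :
    HasBoundedDifferences (signedSup u σ) fun _ => a / Fintype.card ι :=
  hasBoundedDifferences_supAverage (f := fun i k z => sgn (σ k) * u i z)
    (fun i k z => (abs_sgn_mul _ _).trans_le (hu i z))
    fun i k z z' => by rw [← mul_sub, abs_sgn_mul]; exact hosc i z z'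

lemma hasBoundedDifferences_rademacher [DecidableEq ι] (hu : ∀ i z, |u i z| ≤ b)
    (hosc : ∀ i z z', |u i z - u i z'| ≤ a) :
    HasBoundedDifferences (rademacher u) fun _ : ι => a / Fintype.card ι := by
  intro x k z
  rw [rademacher, rademacher, ← sub_div, ← Finset.sum_sub_distrib, abs_div,
    abs_of_pos (by positivity : (0 : ℝ) < 2 ^ Fintype.card ι), div_le_iff₀ (by positivity)]
  exact (Finset.abs_sum_le_sum_abs _ _).trans <|
    (Finset.sum_le_sum fun σ _ => hasBoundedDifferences_signedSup hu hosc σ x k z).trans_eq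
      (by simp [mul_comm])

variable [MeasurableSpace Z]

lemma measurable_signedSup [Countable I] (hm : ∀ i, Measurable (u i)) (σ : ι → Bool) :
    Measurable (signedSup u σ) :=
  measurable_supAverage fun i k => ((hm i).comp (measurable_pi_apply k)).const_mul _

lemma measurable_rademacher [DecidableEq ι] [Countable I] (hm : ∀ i, Measurable (u i)) :
    Measurable (rademacher u : (ι → Z) → ℝ) :=
  (Finset.measurable_sum _ fun σ _ => measurable_signedSup hm σ).div_const _

lemma measurePreserving_swap_coordinates (ν : ι → Measure Z) [∀ k, SigmaFinite (ν k)]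
    (σ : ι → Bool) :
    MeasurePreserving (fun p : (ι → Z) × (ι → Z) =>
        (fun k => bif σ k then p.1 k else p.2 k, fun k => bif σ k then p.2 k else p.1 k))
      ((Measure.pi ν).prod (Measure.pi ν)) ((Measure.pi ν).prod (Measure.pi ν)) := by
  have hpair := measurePreserving_arrowProdEquivProdArrow Z Z ι ν ν
  have hswap := measurePreserving_pi (fun k => (ν k).prod (ν k)) (fun k => (ν k).prod (ν k))
    (f := fun k => bif σ k then id else Prod.swap) fun k => by
      cases σ k
      · exact Measure.measurePreserving_swap
      · exact MeasurePreserving.id _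
  convert hpair.comp (hswap.comp (hpair.symm _)) using 1
  ext p k <;> cases hσ : σ k <;>
    simp [MeasurableEquiv.arrowProdEquivProdArrow, Equiv.arrowProdEquivProdArrow, hσ]

variable [Countable I] {ν : ι → Measure Z} [∀ k, IsProbabilityMeasure (ν k)]

lemma integrable_signedSup (hm : ∀ i, Measurable (u i)) (hu : ∀ i z, |u i z| ≤ b)
    (σ : ι → Bool) : Integrable (signedSup u σ) (Measure.pi ν) :=
  integrable_supAverage (fun i k => ((hm i).comp (measurable_pi_apply k)).const_mul _)
    fun i k s => (abs_sgn_mul _ _).trans_le (hu i (s k))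

lemma integral_ghost_eq_integral_signed_ghost (hm : ∀ i, Measurable (u i)) (σ : ι → Bool) :
    ∫ p : (ι → Z) × (ι → Z), supAverage (fun i k => u i (p.2 k) - u i (p.1 k))
        ∂(Measure.pi ν).prod (Measure.pi ν) =
      ∫ p : (ι → Z) × (ι → Z), supAverage (fun i k => sgn (σ k) * (u i (p.2 k) - u i (p.1 k)))
        ∂(Measure.pi ν).prod (Measure.pi ν) := by
  have hswap := measurePreserving_swap_coordinates ν σ
  have hmeas : Measurable fun p : (ι → Z) × (ι → Z) =>
      supAverage fun i k => u i (p.2 k) - u i (p.1 k) :=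
    measurable_supAverage fun i k => by have := hm i; fun_prop
  conv_lhs => rw [← hswap.map_eq, integral_map hswap.aemeasurable hmeas.aestronglyMeasurable]
  congr! 5 with p i k
  cases hσ : σ k <;> simp [sgn, hσ]

lemma integral_deviation_le_add_integral_signedSup (hm : ∀ i, Measurable (u i))
    (hu : ∀ i z, |u i z| ≤ b) (σ : ι → Bool) :
    ∫ s, deviation u ν s ∂Measure.pi ν ≤
      ∫ s, signedSup u σ s ∂Measure.pi ν + ∫ s, signedSup u (fun k => !σ k) s ∂Measure.pi ν := by
  have h₂ := (integrable_signedSup hm hu σ (ν := ν)).comp_snd (Measure.pi ν)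
  have h₁ := (integrable_signedSup hm hu (fun k => !σ k) (ν := ν)).comp_fst (Measure.pi ν)
  have hbound (τ : ι → Bool) (s : ι → Z) (i : I) (k : ι) : |sgn (τ k) * u i (s k)| ≤ b :=
    (abs_sgn_mul _ _).trans_le (hu i (s k))
  have hsplit (p : (ι → Z) × (ι → Z)) (i : I) (k : ι) :
      sgn (σ k) * (u i (p.2 k) - u i (p.1 k)) =
        sgn (σ k) * u i (p.2 k) + sgn (!σ k) * u i (p.1 k) := by
    cases σ k <;> simp only [sgn, Bool.not_true, Bool.not_false] <;> norm_num <;> ring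
  calc ∫ s, deviation u ν s ∂Measure.pi ν
      ≤ ∫ p : (ι → Z) × (ι → Z), supAverage (fun i k => sgn (σ k) * (u i (p.2 k) - u i (p.1 k)))
          ∂(Measure.pi ν).prod (Measure.pi ν) :=
        (integral_deviation_le_integral_ghost hm hu).trans_eq
          (integral_ghost_eq_integral_signed_ghost hm σ)
    _ ≤ ∫ p : (ι → Z) × (ι → Z), (signedSup u σ p.2 + signedSup u (fun k => !σ k) p.1)
          ∂(Measure.pi ν).prod (Measure.pi ν) := by
        simp only [hsplit]
        refine integral_mono (integrable_supAverage (b := b + b) (fun i k => ?_) fun i k p => ?_)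
          (h₂.add h₁) fun p => supAverage_add_le (hbound σ p.2) (hbound _ p.1)
        · have := hm i; fun_prop
        · exact (abs_add_le _ _).trans
            (add_le_add (hbound σ p.2 i k) (hbound (fun k => !σ k) p.1 i k))
    _ = _ := by
        rw [integral_add h₂ h₁, integral_fun_snd (signedSup u σ),
          integral_fun_fst (signedSup u fun k => !σ k)]
        simp

theorem integral_deviation_le_two_mul_integral_rademacher [DecidableEq ι]
    (hm : ∀ i, Measurable (u i)) (hu : ∀ i z, |u i z| ≤ b) :
    ∫ s, deviation u ν s ∂Measure.pi ν ≤ 2 * ∫ s, rademacher u s ∂Measure.pi ν := by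
  have hneg : ∑ σ : ι → Bool, ∫ s, signedSup u (fun k => !σ k) s ∂Measure.pi ν =
      ∑ σ : ι → Bool, ∫ s, signedSup u σ s ∂Measure.pi ν :=
    (Equiv.piCongrRight fun _ : ι => Equiv.boolNot).sum_comp
      fun σ => ∫ s, signedSup u σ s ∂Measure.pi ν
  have hsum := Finset.sum_le_sum fun (σ : ι → Bool) (_ : σ ∈ Finset.univ) =>
    integral_deviation_le_add_integral_signedSup (ν := ν) hm hu σ
  rw [Finset.sum_add_distrib, hneg, Finset.sum_const, nsmul_eq_mul, Finset.card_univ,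
    Fintype.card_fun, Fintype.card_bool, Nat.cast_pow, Nat.cast_ofNat] at hsum
  simp only [rademacher]
  rw [integral_div, integral_finsetSum _ fun σ _ => integrable_signedSup hm hu σ,
    ← mul_div_assoc, le_div_iff₀ (by positivity)]
  linarith

omit [Countable I] in
lemma hasBoundedDifferences_deviation_sub_two_mul_rademacher [DecidableEq ι]
    (hu : ∀ i z, |u i z| ≤ b) (hosc : ∀ i z z', |u i z - u i z'| ≤ a) :
    HasBoundedDifferences (fun s => deviation u ν s - 2 * rademacher u s)
      fun _ => 3 * a / Fintype.card ι := by
  have h := (hasBoundedDifferences_deviation (ν := ν) hu hosc).sub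
    ((hasBoundedDifferences_rademacher hu hosc).const_mul 2)
  have hsum : ((fun _ => a / Fintype.card ι) + (2 : ℝ≥0) • fun _ => a / Fintype.card ι) =
      fun _ : ι => 3 * a / Fintype.card ι := by
    ext1
    simp only [Pi.add_apply, Pi.smul_apply, smul_eq_mul]
    ring
  simpa only [NNReal.coe_ofNat, hsum] using h

lemma integral_deviation_sub_two_mul_rademacher_nonpos [DecidableEq ι]
    (hm : ∀ i, Measurable (u i)) (hu : ∀ i z, |u i z| ≤ b) :
    ∫ s, (deviation u ν s - 2 * rademacher u s) ∂Measure.pi ν ≤ 0 := by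
  have hosc (i : I) (z z' : Z) : |u i z - u i z'| ≤ (b + b : ℝ≥0) :=
    (abs_sub _ _).trans (add_le_add (hu i z) (hu i z'))
  have hdev := (hasBoundedDifferences_deviation (ν := ν) hu hosc).integrable
    (measurable_deviation hm) (Measure.pi ν)
  have hrad := (hasBoundedDifferences_rademacher hu hosc).integrable
    (measurable_rademacher hm) (Measure.pi ν)
  rw [integral_sub hdev (hrad.const_mul 2), integral_const_mul]
  exact sub_nonpos.2 (integral_deviation_le_two_mul_integral_rademacher hm hu)

theorem measure_deviation_gt_le [DecidableEq ι] [Nonempty ι] (hm : ∀ i, Measurable (u i))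
    (hu : ∀ i z, u i z ∈ Set.Icc (0 : ℝ) 1) {δ : ℝ} (hδ0 : 0 < δ) (hδ1 : δ ≤ 1) :
    Measure.pi ν {s | 2 * rademacher u s + 3 * √(log δ⁻¹ / (2 * Fintype.card ι)) <
      deviation u ν s} ≤ ENNReal.ofReal δ := by
  have hu_abs (i : I) (z : Z) : |u i z| ≤ (1 : ℝ≥0) := abs_le_of_mem_Icc_zero (hu i z)
  have hosc (i : I) (z z' : Z) : |u i z - u i z'| ≤ (1 : ℝ≥0) :=
    (abs_sub_le_of_le_of_le (hu i z).1 (hu i z).2 (hu i z').1 (hu i z').2).trans_eq (by simp)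
  set H : (ι → Z) → ℝ := fun s => deviation u ν s - 2 * rademacher u s with hH_def
  set t : ℝ := 3 * √(log δ⁻¹ / (2 * Fintype.card ι))
  have hH : HasBoundedDifferences H fun _ => 3 * 1 / Fintype.card ι :=
    hasBoundedDifferences_deviation_sub_two_mul_rademacher hu_abs hosc
  have hmean : ∫ s, H s ∂Measure.pi ν ≤ 0 :=
    integral_deviation_sub_two_mul_rademacher_nonpos hm hu_abs
  have htail : (Measure.pi ν).real {s | t ≤ H s - ∫ s', H s' ∂Measure.pi ν} ≤ δ := by
    refine (hH.measureReal_sub_integral_ge_le ((measurable_deviation hm).sub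
      ((measurable_rademacher hm).const_mul 2)) (by positivity)).trans_eq ?_
    have hlog : 0 ≤ log δ⁻¹ := log_nonneg ((one_le_inv₀ hδ0).2 hδ1)
    have hexp : -2 * t ^ 2 / ∑ _k : ι, (3 * 1 / (Fintype.card ι : ℝ)) ^ 2 = log δ := by
      rw [mul_pow, sq_sqrt (by positivity), log_inv, Finset.sum_const, Finset.card_univ,
        nsmul_eq_mul]
      field_simp
    push_cast
    rw [hexp, exp_log hδ0]
  calc Measure.pi ν {s | 2 * rademacher u s + t < deviation u ν s}
      ≤ Measure.pi ν {s | t ≤ H s - ∫ s', H s' ∂Measure.pi ν} :=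
        measure_mono fun s hs => by
          simp only [Set.mem_ofPred_eq, hH_def] at hs hmean ⊢
          linarith
    _ ≤ ENNReal.ofReal δ := by
        rw [← ofReal_measureReal]
        exact ENNReal.ofReal_le_ofReal htail

end Rademacher

section TwoStageSampling

lemma ofReal_one_sub_two_mul_le_measure {Ω : Type*} [MeasurableSpace Ω] {ρ : Measure Ω}
    [IsProbabilityMeasure ρ] {A B C : Set Ω} {δ : ℝ} (hδ : 0 ≤ δ) (hcover : (A ∪ B)ᶜ ⊆ C)
    (hA : ρ A ≤ ENNReal.ofReal δ) (hB : ρ B ≤ ENNReal.ofReal δ) :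
    ENNReal.ofReal (1 - 2 * δ) ≤ ρ C := by
  rw [ENNReal.ofReal_sub _ (by positivity), ENNReal.ofReal_one, tsub_le_iff_right, two_mul,
    ENNReal.ofReal_add hδ hδ]
  calc 1 = ρ Set.univ := measure_univ.symm
    _ ≤ ρ (C ∪ (A ∪ B)) := measure_mono (Set.compl_subset_iff_union.1
        (Set.compl_subset_comm.1 hcover)).symm.subset
    _ ≤ ρ C + (ρ A + ρ B) :=
        (measure_union_le _ _).trans (add_le_add_right (measure_union_le _ _) _)
    _ ≤ ρ C + (ENNReal.ofReal δ + ENNReal.ofReal δ) := by gcongr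

variable {I W ι κ : Type*} [MeasurableSpace W] [Fintype ι] [Fintype κ]

/-- The Markov kernel which, given one distribution for each domain in `ι`, draws independently
`κ` many samples from each of them. -/
def sampleKernel (W ι κ : Type*) [MeasurableSpace W] [Fintype ι] [Fintype κ] :
    Kernel (ι → ProbabilityMeasure W) (ι × κ → W) where
  toFun P := Measure.pi fun p => (P p.1 : Measure W)
  measurable' := by
    refine Measurable.measure_of_isPiSystem_of_isProbabilityMeasure generateFrom_pi.symm
      isPiSystem_pi ?_
    rintro _ ⟨s, hs, rfl⟩
    simp only [Measure.pi_pi]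
    exact Finset.measurable_prod _ fun p _ => (Measure.measurable_coe (hs p (Set.mem_univ p))).comp
      (measurable_subtype_coe.comp (measurable_pi_apply p.1))

lemma sampleKernel_apply (P : ι → ProbabilityMeasure W) :
    sampleKernel W ι κ P = Measure.pi fun p => (P p.1 : Measure W) := rfl

instance : IsMarkovKernel (sampleKernel W ι κ) :=
  ⟨fun P => by rw [sampleKernel_apply]; infer_instance⟩

lemma measurable_integral_probabilityMeasure {f : W → ℝ} (hf : Measurable f) :
    Measurable fun P : ProbabilityMeasure W => ∫ w, f w ∂(P : Measure W) :=
  (hf.stronglyMeasurable.integral_kernel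
    (κ := ⟨Subtype.val, measurable_subtype_coe⟩)).measurable

omit [MeasurableSpace W] in
lemma average_comp_fst [Nonempty κ] (φ : ι → ℝ) :
    (Fintype.card (ι × κ) : ℝ)⁻¹ * ∑ p : ι × κ, φ p.1 =
      (Fintype.card ι : ℝ)⁻¹ * ∑ j, φ j := by
  rw [Fintype.sum_prod_type]
  simp only [Finset.sum_const, Finset.card_univ, nsmul_eq_mul, Fintype.card_prod, Nat.cast_mul]
  rw [← Finset.mul_sum]
  field_simp

variable [Nonempty ι] [Nonempty κ] {u : I → W → ℝ}

lemma integral_integral_le_add_deviation_add_deviation {b : ℝ≥0}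
    (Q : Measure (ProbabilityMeasure W)) [IsProbabilityMeasure Q] (hu : ∀ i w, |u i w| ≤ b)
    (P : ι → ProbabilityMeasure W) (s : ι × κ → W) (i : I) :
    ∫ P', ∫ w, u i w ∂(P' : Measure W) ∂Q ≤
      (Fintype.card (ι × κ) : ℝ)⁻¹ * ∑ p, u i (s p)
        + deviation u (fun p => (P p.1 : Measure W)) s
        + deviation (fun i (P' : ProbabilityMeasure W) => ∫ w, u i w ∂(P' : Measure W))
            (fun _ => Q) P := by
  have hdomains := average_integral_le_add_deviation (ν := fun _ : ι => Q)
    (fun i (P' : ProbabilityMeasure W) => abs_integral_le (P := (P' : Measure W)) (hu i)) i P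
  have hsamples := average_integral_le_add_deviation (ν := fun p : ι × κ => (P p.1 : Measure W))
    hu i s
  rw [average_comp_fst fun j => ∫ w, u i w ∂(P j : Measure W)] at hsamples
  rw [Finset.sum_const, Finset.card_univ, nsmul_eq_mul,
    inv_mul_cancel_left₀ (Nat.cast_ne_zero.2 Fintype.card_ne_zero)] at hdomains
  linarith

variable [Countable I] [DecidableEq ι] [DecidableEq κ] {δ : ℝ}

lemma compProd_sampleKernel_deviation_gt_le (ρ : Measure (ι → ProbabilityMeasure W))
    [IsProbabilityMeasure ρ] (hm : ∀ i, Measurable (u i))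
    (hu : ∀ i w, u i w ∈ Set.Icc (0 : ℝ) 1) (hδ0 : 0 < δ) (hδ1 : δ ≤ 1) :
    (ρ ⊗ₘ sampleKernel W ι κ) {ω | 2 * rademacher u ω.2 +
        3 * √(log δ⁻¹ / (2 * Fintype.card (ι × κ))) <
      deviation u (fun p => (ω.1 p.1 : Measure W)) ω.2} ≤ ENNReal.ofReal δ := by
  have hmeas : MeasurableSet {ω : (ι → ProbabilityMeasure W) × (ι × κ → W) |
      2 * rademacher u ω.2 + 3 * √(log δ⁻¹ / (2 * Fintype.card (ι × κ))) <
        deviation u (fun p => (ω.1 p.1 : Measure W)) ω.2} := by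
    refine measurableSet_lt ?_ (measurable_supAverage fun i p => ?_)
    · exact (((measurable_rademacher hm).comp measurable_snd).const_mul 2).add_const _
    · exact ((measurable_integral_probabilityMeasure (hm i)).comp
        ((measurable_pi_apply p.1).comp measurable_fst)).sub
        ((hm i).comp ((measurable_pi_apply p).comp measurable_snd))
  rw [Measure.compProd_apply hmeas]
  refine (lintegral_mono fun P => ?_).trans_eq (by simp : ∫⁻ _, ENNReal.ofReal δ ∂ρ = _)
  exact measure_deviation_gt_le hm hu hδ0 hδ1

theorem two_stage_rademacher_bound (Q : Measure (ProbabilityMeasure W)) [IsProbabilityMeasure Q]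
    (hm : ∀ i, Measurable (u i)) (hu : ∀ i w, u i w ∈ Set.Icc (0 : ℝ) 1)
    (hδ0 : 0 < δ) (hδ1 : δ ≤ 1) :
    ENNReal.ofReal (1 - 2 * δ) ≤ (Measure.pi (fun _ : ι => Q) ⊗ₘ sampleKernel W ι κ) {ω | ∀ i,
      ∫ P, ∫ w, u i w ∂(P : Measure W) ∂Q ≤
        (Fintype.card (ι × κ) : ℝ)⁻¹ * ∑ p, u i (ω.2 p) + 2 * rademacher u ω.2
          + 2 * rademacher (fun i (P : ProbabilityMeasure W) => ∫ w, u i w ∂(P : Measure W)) ω.1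
          + 3 * √(log δ⁻¹ / (2 * Fintype.card (ι × κ)))
          + 3 * √(log δ⁻¹ / (2 * Fintype.card ι))} := by
  set v : I → ProbabilityMeasure W → ℝ := fun i P => ∫ w, u i w ∂(P : Measure W)
  set ρ := Measure.pi (fun _ : ι => Q) ⊗ₘ sampleKernel W ι κ
  set badDomains := {P : ι → ProbabilityMeasure W |
    2 * rademacher v P + 3 * √(log δ⁻¹ / (2 * Fintype.card ι)) < deviation v (fun _ => Q) P}
  set badSamples := {ω : (ι → ProbabilityMeasure W) × (ι × κ → W) |
    2 * rademacher u ω.2 + 3 * √(log δ⁻¹ / (2 * Fintype.card (ι × κ))) <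
      deviation u (fun p => (ω.1 p.1 : Measure W)) ω.2}
  have hv_meas (i : I) : Measurable (v i) := measurable_integral_probabilityMeasure (hm i)
  have hv (i : I) (P : ProbabilityMeasure W) : v i P ∈ Set.Icc (0 : ℝ) 1 :=
    integral_mem_Icc_zero (Eventually.of_forall (hu i))
  have hdomains : ρ (Prod.fst ⁻¹' badDomains) ≤ ENNReal.ofReal δ := by
    have hbad : MeasurableSet badDomains := measurableSet_lt
      (((measurable_rademacher hv_meas).const_mul 2).add_const _) (measurable_deviation hv_meas)
    rw [← Measure.map_apply measurable_fst hbad]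
    change ρ.fst badDomains ≤ _
    rw [Measure.fst_compProd]
    exact measure_deviation_gt_le hv_meas hv hδ0 hδ1
  have hsamples : ρ badSamples ≤ ENNReal.ofReal δ :=
    compProd_sampleKernel_deviation_gt_le _ hm hu hδ0 hδ1
  refine ofReal_one_sub_two_mul_le_measure hδ0.le (fun ω hω i => ?_) hdomains hsamples
  simp only [Set.mem_compl_iff, Set.mem_union, not_or, Set.mem_preimage, badDomains, badSamples,
    Set.mem_ofPred_eq, not_lt] at hω
  have hle := integral_integral_le_add_deviation_add_deviation (b := 1) Q
    (fun i w => abs_le_of_mem_Icc_zero (hu i w)) ω.1 ω.2 i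
  linarith [hω.1, hω.2]

end TwoStageSampling

section MetaDistribution

lemma measurableEmbedding_piMap {ι : Type*} [Countable ι] {α β : ι → Type*}
    [∀ i, MeasurableSpace (α i)] [∀ i, MeasurableSpace (β i)] {f : ∀ i, α i → β i}
    (hf : ∀ i, MeasurableEmbedding (f i)) : MeasurableEmbedding (Pi.map f) := by
  refine MeasurableEmbedding.iff_comap_eq.2
    ⟨.piMap fun i => (hf i).injective, ?_, ?_⟩
  · simp only [MeasurableSpace.pi, MeasurableSpace.comap_iSup, MeasurableSpace.comap_comp]
    refine iSup_congr fun i => ?_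
    conv_rhs => rw [← (hf i).comap_eq, MeasurableSpace.comap_comp]
    rfl
  · rw [Set.range_piMap]
    exact .univ_pi fun i => (hf i).measurableSet_range

lemma measurableEmbedding_coe_probabilityMeasure (W : Type*) [MeasurableSpace W] :
    MeasurableEmbedding ((↑) : ProbabilityMeasure W → Measure W) :=
  MeasurableEmbedding.subtype_coe ProbabilityMeasure.measurableSet_isProbabilityMeasure

lemma exists_map_coe_eq {W : Type*} [MeasurableSpace W] (μ : Measure (Measure W))
    [IsProbabilityMeasure μ] (hμ : ∀ᵐ P ∂μ, IsProbabilityMeasure P) :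
    ∃ Q : Measure (ProbabilityMeasure W), IsProbabilityMeasure Q ∧ Q.map (↑) = μ := by
  have hmap : (μ.comap ((↑) : ProbabilityMeasure W → Measure W)).map (↑) = μ :=
    (map_comap_subtype_coe ProbabilityMeasure.measurableSet_isProbabilityMeasure μ).trans
      (Measure.restrict_eq_self_of_ae_mem hμ)
  have : IsProbabilityMeasure
      ((μ.comap ((↑) : ProbabilityMeasure W → Measure W)).map ProbabilityMeasure.toMeasure) := by
    rwa [hmap]
  exact ⟨_, Measure.isProbabilityMeasure_of_map ProbabilityMeasure.toMeasure, hmap⟩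

variable {X : Type*} [MeasurableSpace X]

lemma jointLaw_map_coe (n m : ℕ) (Q : Measure (ProbabilityMeasure (X × Ysp)))
    [IsProbabilityMeasure Q] :
    jointLaw n m (Q.map (↑)) =
      ((Measure.pi fun _ : Fin n => Q) ⊗ₘ sampleKernel (X × Ysp) (Fin n) (Fin m)).map
        (Prod.map (Pi.map fun _ => (↑)) id) := by
  have hcoe := measurableEmbedding_coe_probabilityMeasure (X × Ysp)
  set coes : (Fin n → ProbabilityMeasure (X × Ysp)) → Fin n → Measure (X × Ysp) :=
    Pi.map fun _ => (↑)
  have hcoes : MeasurableEmbedding coes := measurableEmbedding_piMap fun _ => hcoe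
  have hmeas : Measurable (Prod.map coes (id : (Fin n × Fin m → X × Ysp) → _)) :=
    hcoes.measurable.prodMap measurable_id
  set law : (Fin n → Measure (X × Ysp)) →
      Measure ((Fin n → Measure (X × Ysp)) × (Fin n × Fin m → X × Ysp)) :=
    fun P => (Measure.pi fun p : Fin n × Fin m => P p.1).map fun s => (P, s)
  have hlaw : law ∘ coes =
      (Kernel.id ×ₖ sampleKernel (X × Ysp) (Fin n) (Fin m)).map (Prod.map coes id) := by
    ext1 P
    rw [Kernel.map_apply _ hmeas, Kernel.prod_apply, Kernel.id_apply, Measure.dirac_prod,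
      Measure.map_map hmeas measurable_prodMk_left]
    rfl
  have hlaw_aem : AEMeasurable law ((Measure.pi fun _ : Fin n => Q).map coes) := by
    rw [hcoes.aemeasurable_map_iff, hlaw]
    exact (Kernel.measurable _).aemeasurable
  have : IsProbabilityMeasure (Q.map ((↑) : _ → Measure (X × Ysp))) :=
    Measure.isProbabilityMeasure_map hcoe.measurable.aemeasurable
  calc jointLaw n m (Q.map (↑))
      = ((Measure.pi fun _ : Fin n => Q).map coes).bind law :=
        congrArg (·.bind law) (Measure.pi_map_pi fun _ => hcoe.measurable.aemeasurable).symm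
    _ = (Measure.pi fun _ : Fin n => Q).bind (law ∘ coes) := by
        rw [Measure.bind, AEMeasurable.map_map_of_aemeasurable hlaw_aem
          hcoes.measurable.aemeasurable, Measure.bind]
    _ = _ := by
        rw [hlaw, ← Measure.map_comp _ _ hmeas, ← Measure.compProd_eq_comp_prod]

lemma compProd_sampleKernel_preimage_le_jointLaw (n m : ℕ)
    (Q : Measure (ProbabilityMeasure (X × Ysp))) [IsProbabilityMeasure Q]
    (A : Set ((Fin n → Measure (X × Ysp)) × (Fin n × Fin m → X × Ysp))) :
    (Measure.pi (fun _ : Fin n => Q) ⊗ₘ sampleKernel (X × Ysp) (Fin n) (Fin m))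
        (Prod.map (Pi.map fun _ => (↑)) id ⁻¹' A) ≤ jointLaw n m (Q.map (↑)) A := by
  rw [jointLaw_map_coe]
  exact Measure.le_map_apply ((measurableEmbedding_piMap fun _ =>
    measurableEmbedding_coe_probabilityMeasure _).measurable.prodMap measurable_id).aemeasurable A

variable {ℓ : Ysp → Ysp → ℝ} {f : X → Ysp}

lemma metaRisk_map_coe (Q : Measure (ProbabilityMeasure (X × Ysp))) :
    metaRisk ℓ (Q.map (↑)) f = ∫ P, ∫ z, ℓ (f z.1) z.2 ∂(P : Measure (X × Ysp)) ∂Q :=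
  (measurableEmbedding_coe_probabilityMeasure _).integral_map _

lemma metaRisk_mem_Icc (hℓ01 : ∀ a b, ℓ a b ∈ Set.Icc (0 : ℝ) 1)
    {μ : Measure (Measure (X × Ysp))} [IsProbabilityMeasure μ]
    (hμ : ∀ᵐ P ∂μ, IsProbabilityMeasure P) : metaRisk ℓ μ f ∈ Set.Icc (0 : ℝ) 1 :=
  integral_mem_Icc_zero <| hμ.mono fun _ _ =>
    integral_mem_Icc_zero (Eventually.of_forall fun _ => hℓ01 _ _)

lemma measurable_loss_comp (ℓ : Ysp → Ysp → ℝ) (hf : Measurable f) :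
    Measurable fun z : X × Ysp => ℓ (f z.1) z.2 :=
  (Measurable.of_discrete (f := fun q : Ysp × Ysp => ℓ q.1 q.2)).comp
    ((hf.comp measurable_fst).prodMk measurable_snd)

end MetaDistribution

section SupOverSet

variable {α : Type*} {F : Set α}

lemma le_biSup_of_forall_mem_le {g : α → ℝ} {b : ℝ} (hg : ∀ f ∈ F, g f ≤ b) {f : α}
    (hf : f ∈ F) : g f ≤ ⨆ f ∈ F, g f := by
  have hbdd : BddAbove (Set.range fun f => ⨆ _ : f ∈ F, g f) := by
    refine ⟨max b 0, Set.forall_mem_range.2 fun f => ?_⟩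
    exact Real.iSup_le (fun hf => (hg f hf).trans (le_max_left _ _)) (le_max_right _ _)
  simpa [hf] using le_ciSup hbdd f

lemma rademacher_le_average_biSup {Z ι : Type*} [Fintype ι] [DecidableEq ι] {u : α → Z → ℝ}
    {b : ℝ≥0} (hF : F.Nonempty) (hu : ∀ f ∈ F, ∀ z, |u f z| ≤ b) (s : ι → Z) :
    rademacher (fun f : F => u f) s ≤
      (∑ σ : ι → Bool, ⨆ f ∈ F, (Fintype.card ι : ℝ)⁻¹ * ∑ k, sgn (σ k) * u f (s k)) /
        2 ^ Fintype.card ι := by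
  have := hF.to_subtype
  refine div_le_div_of_nonneg_right (Finset.sum_le_sum fun σ _ => ciSup_le fun f => ?_)
    (by positivity)
  exact le_biSup_of_forall_mem_le
    (g := fun f => (Fintype.card ι : ℝ)⁻¹ * ∑ k, sgn (σ k) * u f (s k)) (b := b)
    (fun f hf => (abs_le.1 <| abs_average_le fun k =>
    (abs_sgn_mul _ _).trans_le (hu f hf (s k))).2) f.2

end SupOverSet

section LossClass

variable {X : Type*} [MeasurableSpace X] {ℓ : Ysp → Ysp → ℝ} {F : Set (X → Ysp)}

lemma rademacher_le_rad {ι : Type*} [Fintype ι] [DecidableEq ι] (hF : F.Nonempty)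
    (hℓ01 : ∀ a b, ℓ a b ∈ Set.Icc (0 : ℝ) 1) (S : ι → X × Ysp) :
    rademacher (fun (f : F) z => ℓ (f.1 z.1) z.2) S ≤ rad ℓ F S :=
  rademacher_le_average_biSup (b := 1) (u := fun (f : X → Ysp) (z : X × Ysp) => ℓ (f z.1) z.2) hF
    (fun _ _ _ => abs_le_of_mem_Icc_zero (hℓ01 _ _)) S

lemma rademacher_le_radDom {n : ℕ} (hF : F.Nonempty)
    (hℓ01 : ∀ a b, ℓ a b ∈ Set.Icc (0 : ℝ) 1) (P : Fin n → ProbabilityMeasure (X × Ysp)) :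
    rademacher (fun (f : F) (P : ProbabilityMeasure (X × Ysp)) =>
      ∫ z, ℓ (f.1 z.1) z.2 ∂(P : Measure (X × Ysp))) P ≤
        radDom ℓ F (Pi.map (fun _ => (↑)) P) := by
  have h := rademacher_le_average_biSup (b := 1)
    (u := fun (f : X → Ysp) (P : ProbabilityMeasure (X × Ysp)) => risk ℓ P f) hF
    (fun f _ P => abs_integral_le fun _ => abs_le_of_mem_Icc_zero (hℓ01 _ _)) P
  rwa [Fintype.card_fin] at h

lemma metaRisk_le_metaRisk_add {μ μ' : Measure (Measure (X × Ysp))} [IsProbabilityMeasure μ]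
    [IsProbabilityMeasure μ'] (hμ : ∀ᵐ P ∂μ, IsProbabilityMeasure P)
    (hμ' : ∀ᵐ P ∂μ', IsProbabilityMeasure P) (hℓ01 : ∀ a b, ℓ a b ∈ Set.Icc (0 : ℝ) 1) {ε : ℝ}
    (hdist : (⨆ f ∈ F, |metaRisk ℓ μ' f - metaRisk ℓ μ f|) ≤ ε) {f : X → Ysp} (hf : f ∈ F) :
    metaRisk ℓ μ f ≤ metaRisk ℓ μ' f + ε := by
  have hbound (f : X → Ysp) : |metaRisk ℓ μ' f - metaRisk ℓ μ f| ≤ 1 + 1 :=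
    (abs_sub _ _).trans <| add_le_add (abs_le_of_mem_Icc_zero (metaRisk_mem_Icc hℓ01 hμ'))
      (abs_le_of_mem_Icc_zero (metaRisk_mem_Icc hℓ01 hμ))
  have hle : |metaRisk ℓ μ' f - metaRisk ℓ μ f| ≤ ε :=
    (le_biSup_of_forall_mem_le (g := fun f => |metaRisk ℓ μ' f - metaRisk ℓ μ f|)
      (fun f _ => hbound f) hf).trans hdist
  linarith [(abs_le.1 hle).1]

end LossClass

lemma sqrt_log_inv_div_le {δ a b : ℝ} (hδ0 : 0 < δ) (hδ1 : δ ≤ 1) (hb : 0 < b) (hba : b ≤ a) :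
    √(log δ⁻¹ / a) ≤ √(log (2 / δ) / b) := by
  have h1 : 1 ≤ δ⁻¹ := (one_le_inv₀ hδ0).2 hδ1
  have hlog : log δ⁻¹ ≤ log (2 / δ) := by
    rw [div_eq_mul_inv]; exact log_le_log (by positivity) (by linarith)
  exact sqrt_le_sqrt (div_le_div₀ ((log_nonneg h1).trans hlog) hlog hb hba)

/-- With confidence at least `1 - 2δ` over the draw of `n` domains i.i.d.
from the proxy meta-distribution `μ'` and `m` i.i.d. samples from each domain,
simultaneously for all `f ∈ F`:
`L^μ(f) ≤ L̂^{μ'}(f) + 2 R_{mn}(F) + 2 R_n(F) + 3 √(ln(2/δ)/(2mn)) + 3 √(ln(2/δ)/n) + ε`,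
provided `D(μ, μ') ≤ ε`. -/
theorem statement0 {X : Type*} [MeasurableSpace X]
    (ℓ : Ysp → Ysp → ℝ) (hℓ01 : ∀ a b, ℓ a b ∈ Set.Icc (0 : ℝ) 1)
    (hℓLip : LipschitzWith 1 fun p : Ysp × Ysp => ℓ p.1 p.2)
    (F : Set (X → Ysp)) (hFcount : F.Countable) (hFmeas : ∀ f ∈ F, Measurable f)
    (μ μ' : Measure (Measure (X × Ysp)))
    [IsProbabilityMeasure μ] [IsProbabilityMeasure μ']
    (hμprob : ∀ᵐ P ∂μ, IsProbabilityMeasure P)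
    (hμ'prob : ∀ᵐ P ∂μ', IsProbabilityMeasure P)
    (n m : ℕ) (hn : 0 < n) (hm : 0 < m)
    (δ ε : ℝ) (hδ0 : 0 < δ) (hδ1 : δ < 1) (hε : 0 ≤ ε)
    (hdist : (⨆ f ∈ F, |metaRisk ℓ μ' f - metaRisk ℓ μ f|) ≤ ε) :
    ENNReal.ofReal (1 - 2 * δ) ≤
      jointLaw n m μ' {ω | ∀ f ∈ F,
        metaRisk ℓ μ f ≤
          ((m : ℝ) * n)⁻¹ * ∑ p : Fin n × Fin m, ℓ (f (ω.2 p).1) (ω.2 p).2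
            + 2 * rad ℓ F ω.2 + 2 * radDom ℓ F ω.1
            + 3 * Real.sqrt (Real.log (2 / δ) / (2 * m * n))
            + 3 * Real.sqrt (Real.log (2 / δ) / n) + ε} := by
  obtain ⟨Q, hQ, rfl⟩ := exists_map_coe_eq μ' hμ'prob
  have : Countable F := hFcount.to_subtype
  have : NeZero n := ⟨hn.ne'⟩
  have : NeZero m := ⟨hm.ne'⟩
  have hbound := two_stage_rademacher_bound (ι := Fin n) (κ := Fin m) Q
    (u := fun (f : F) z => ℓ (f.1 z.1) z.2) (fun f => measurable_loss_comp ℓ (hFmeas f f.2))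
    (fun f z => hℓ01 _ _) hδ0 hδ1.le
  refine hbound.trans <| (measure_mono fun ω hω f hf => ?_).trans <|
    compProd_sampleKernel_preimage_le_jointLaw n m Q _
  have hQ_bound := hω ⟨f, hf⟩
  have hshift := metaRisk_le_metaRisk_add hμprob hμ'prob hℓ01 hdist hf
  have hrad := rademacher_le_rad ⟨f, hf⟩ hℓ01 ω.2
  have hradDom := rademacher_le_radDom ⟨f, hf⟩ hℓ01 ω.1
  have hsamples : √(log δ⁻¹ / (2 * (m * n))) ≤ √(log (2 / δ) / (2 * m * n)) :=
    sqrt_log_inv_div_le hδ0 hδ1.le (by positivity) (mul_assoc _ _ _).le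
  have hdomains : √(log δ⁻¹ / (2 * n)) ≤ √(log (2 / δ) / n) :=
    sqrt_log_inv_div_le hδ0 hδ1.le (by positivity) (by linarith [n.cast_nonneg (α := ℝ)])
  rw [Fintype.card_prod, Fintype.card_fin, Fintype.card_fin, Nat.cast_mul, mul_comm (n : ℝ)]
    at hQ_bound
  rw [metaRisk_map_coe] at hshift
  simp only [Prod.map_fst, Prod.map_snd, id_eq]
  linarith
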